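/- Let f_i(x) = a_i x + b_i (i = 1, 2, 3) be monotone nondecreasing linear functions, none of which is the identity, with 0 ≤ a_1, a_3 < 1, a_2 ≥ 1, and a_1·a_2·a_3 < 1. If γ(f_1) ≥ γ(f_2) ≥ γ(f_3), then for every x ∈ ℝ, f_3∘f_2∘f_1(x) ≤ max{ f_2∘f_1∘f_3(x), f_1∘f_3∘f_2(x) }. -/

import Mathlib

/-!
An affine self-map `f` of the line almost commutes with an affine map `h` of slope `s` fixing `g`:
`f (h x) - h (f x) = (1 - s) * (f g - g)`. Applied to `f₂ ∘ f₁` and the fixed point `g₃` of `f₃`,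
and to `f₃ ∘ f₂` and the fixed point `g₁` of `f₁`, this reduces the claim to
`g₃ ≤ f₂ (f₁ g₃)` or `f₃ (f₂ g₁) ≤ g₁`. Now let `T = f₃ ∘ f₂ ∘ f₁`, whose slope is at most `1`, so
that `T x - x` is nonincreasing. If `f₂ (f₁ g₃) ≤ g₃`, then `T g₃ ≤ f₃ g₃ = g₃`, hence
`f₃ (f₂ g₁) = T g₁ ≤ g₁`.
-/

/-- `γ` of the linear function `x ↦ a x + b`: the fixed point `b / (1 - a)` if `a ≠ 1`,
`+∞` if `a = 1` and `b < 0`, `-∞` if `a = 1` and `b ≥ 0`. -/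
noncomputable def gam (a b : ℝ) : EReal :=
  if a = 1 then (if b < 0 then (⊤ : EReal) else (⊥ : EReal))
  else ((b / (1 - a) : ℝ) : EReal)

section AffineMap

variable {K : Type*} [CommRing K]

lemma affineMap_map_sub_map (f : K →ᵃ[K] K) (x y : K) :
    f x - f y = f.linear 1 * (x - y) := by
  calc f x - f y = f.linear ((x - y) • 1) := by simpa using (f.linearMap_vsub x y).symm
    _ = f.linear 1 * (x - y) := by rw [map_smul, smul_eq_mul, mul_comm]

lemma affineMap_comp_linear_one (f h : K →ᵃ[K] K) :
    (f.comp h).linear 1 = f.linear 1 * h.linear 1 := by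
  calc (f.comp h).linear 1 = f.linear (h.linear 1 • 1) := by simp
    _ = f.linear 1 * h.linear 1 := by rw [map_smul, smul_eq_mul, mul_comm]

lemma map_map_sub_map_map_of_fixed (f : K →ᵃ[K] K) {h : K →ᵃ[K] K} {g : K} (hg : h g = g)
    (x : K) : f (h x) - h (f x) = (1 - h.linear 1) * (f g - g) := by
  have hhx := affineMap_map_sub_map h x g
  have hhfx := affineMap_map_sub_map h (f x) g
  have hfx := affineMap_map_sub_map f x g
  have hfhx := affineMap_map_sub_map f (h x) g
  rw [hg] at hhx hhfx
  linear_combination hfhx + f.linear 1 * hhx - hhfx - h.linear 1 * hfx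

section PartialOrder

variable [PartialOrder K] [IsOrderedRing K]

lemma affineMap_monotone {f : K →ᵃ[K] K} (hf : 0 ≤ f.linear 1) : Monotone f := by
  intro x y hxy
  rw [← sub_nonneg, affineMap_map_sub_map]
  exact mul_nonneg hf (sub_nonneg.mpr hxy)

lemma affineMap_antitone_sub_self {f : K →ᵃ[K] K} (hf : f.linear 1 ≤ 1) :
    Antitone fun x ↦ f x - x := by
  intro x y hxy
  have hdiff : f y - f x ≤ y - x := by
    rw [affineMap_map_sub_map]
    exact mul_le_of_le_one_left (sub_nonneg.mpr hxy) hf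
  exact sub_le_sub_iff.mpr (by linear_combination hdiff)

lemma map_map_le_of_fixed_le_map {f h : K →ᵃ[K] K} {g : K} (hg : h g = g)
    (hh : h.linear 1 ≤ 1) (hfg : g ≤ f g) (x : K) : h (f x) ≤ f (h x) := by
  rw [← sub_nonneg, map_map_sub_map_map_of_fixed f hg]
  exact mul_nonneg (sub_nonneg.mpr hh) (sub_nonneg.mpr hfg)

lemma map_map_le_of_map_fixed_le {f h : K →ᵃ[K] K} {g : K} (hg : h g = g)
    (hh : h.linear 1 ≤ 1) (hfg : f g ≤ g) (x : K) : f (h x) ≤ h (f x) := by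
  rw [← sub_nonpos, map_map_sub_map_map_of_fixed f hg]
  exact mul_nonpos_of_nonneg_of_nonpos (sub_nonneg.mpr hh) (sub_nonpos.mpr hfg)

end PartialOrder

section LinearOrder

variable [LinearOrder K] [IsOrderedRing K] {f₁ f₂ f₃ : K →ᵃ[K] K} {g₁ g₃ : K}

lemma le_map_map_or_map_map_le_of_fixed (hg₁ : f₁ g₁ = g₁) (hg₃ : f₃ g₃ = g₃) (hg : g₃ ≤ g₁)
    (hf₃ : 0 ≤ f₃.linear 1) (hprod : f₁.linear 1 * f₂.linear 1 * f₃.linear 1 ≤ 1) :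
    g₃ ≤ f₂ (f₁ g₃) ∨ f₃ (f₂ g₁) ≤ g₁ := by
  refine (le_total g₃ (f₂ (f₁ g₃))).imp_right fun hle ↦ ?_
  let T := f₃.comp (f₂.comp f₁)
  have hT : T.linear 1 ≤ 1 := by
    rw [affineMap_comp_linear_one, affineMap_comp_linear_one]
    linear_combination hprod
  have hTg₃ : T g₃ ≤ g₃ := (affineMap_monotone hf₃ hle).trans_eq hg₃
  have hTg₁ : T g₁ ≤ g₁ :=
    sub_nonpos.mp ((affineMap_antitone_sub_self hT hg).trans (sub_nonpos.mpr hTg₃))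
  calc f₃ (f₂ g₁) = T g₁ := by simp [T, hg₁]
    _ ≤ g₁ := hTg₁

theorem comp_comp_le_max_of_fixed (hg₁ : f₁ g₁ = g₁) (hg₃ : f₃ g₃ = g₃) (hg : g₃ ≤ g₁)
    (hf₁ : f₁.linear 1 ≤ 1) (hf₃ : 0 ≤ f₃.linear 1) (hf₃' : f₃.linear 1 ≤ 1)
    (hprod : f₁.linear 1 * f₂.linear 1 * f₃.linear 1 ≤ 1) (x : K) :
    f₃ (f₂ (f₁ x)) ≤ max (f₂ (f₁ (f₃ x))) (f₁ (f₃ (f₂ x))) := by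
  rcases le_map_map_or_map_map_le_of_fixed hg₁ hg₃ hg hf₃ hprod with h | h
  · exact le_max_of_le_left (map_map_le_of_fixed_le_map (f := f₂.comp f₁) hg₃ hf₃' h x)
  · exact le_max_of_le_right (map_map_le_of_map_fixed_le (f := f₃.comp f₂) hg₁ hf₁ h x)

end LinearOrder

/-- The function `x ↦ a * x + b`, as an affine self-map of `K`;
this gives access to composition and to the slope `(mulAdd a b).linear 1 = a`. -/
def mulAdd (a b : K) : K →ᵃ[K] K :=
  a • AffineMap.id K K + AffineMap.const K K b

lemma mulAdd_apply (a b x : K) : mulAdd a b x = a * x + b := by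
  simp [mulAdd]

lemma mulAdd_linear_one (a b : K) : (mulAdd a b).linear 1 = a := by
  simp [mulAdd]

end AffineMap

lemma mulAdd_fixed {K : Type*} [Field K] {a : K} (ha : a ≠ 1) (b : K) :
    mulAdd a b (b / (1 - a)) = b / (1 - a) := by
  have : 1 - a ≠ 0 := sub_ne_zero.mpr ha.symm
  rw [mulAdd_apply]
  field_simp
  ring

lemma gam_of_ne_one {a : ℝ} (ha : a ≠ 1) (b : ℝ) : gam a b = ((b / (1 - a) : ℝ) : EReal) :=
  if_neg ha

theorem stmt15_general (a1 b1 a2 b2 a3 b3 : ℝ) (ha1 : a1 < 1) (ha3 : 0 ≤ a3) (ha3' : a3 < 1)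
    (hprod : a1 * a2 * a3 ≤ 1) (h31 : gam a3 b3 ≤ gam a1 b1) (x : ℝ) :
    a3 * (a2 * (a1 * x + b1) + b2) + b3 ≤
      max (a2 * (a1 * (a3 * x + b3) + b1) + b2)
        (a1 * (a3 * (a2 * x + b2) + b3) + b1) := by
  have hg : b3 / (1 - a3) ≤ b1 / (1 - a1) := by
    rwa [gam_of_ne_one ha1.ne, gam_of_ne_one ha3'.ne, EReal.coe_le_coe_iff] at h31
  simpa only [mulAdd_apply] using
    comp_comp_le_max_of_fixed (f₁ := mulAdd a1 b1) (f₂ := mulAdd a2 b2) (f₃ := mulAdd a3 b3)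
      (mulAdd_fixed ha1.ne b1) (mulAdd_fixed ha3'.ne b3) hg
      (by simpa only [mulAdd_linear_one] using ha1.le)
      (by simpa only [mulAdd_linear_one] using ha3)
      (by simpa only [mulAdd_linear_one] using ha3'.le)
      (by simpa only [mulAdd_linear_one] using hprod) x

/-- For non-identity monotone linear `fᵢ(x) = aᵢx + bᵢ` with `0 ≤ a₁, a₃ < 1`,
`a₂ ≥ 1`, `a₁a₂a₃ < 1` and `γ(f₁) ≥ γ(f₂) ≥ γ(f₃)`:
`f₃∘f₂∘f₁ ≤ max (f₂∘f₁∘f₃) (f₁∘f₃∘f₂)` pointwise. -/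
theorem stmt15 (a1 b1 a2 b2 a3 b3 : ℝ)
    (ha1 : 0 ≤ a1) (ha1' : a1 < 1) (ha3 : 0 ≤ a3) (ha3' : a3 < 1) (ha2 : 1 ≤ a2)
    (hprod : a1 * a2 * a3 < 1)
    (hn1 : (a1, b1) ≠ (1, 0)) (hn2 : (a2, b2) ≠ (1, 0)) (hn3 : (a3, b3) ≠ (1, 0))
    (h21 : gam a2 b2 ≤ gam a1 b1) (h32 : gam a3 b3 ≤ gam a2 b2) :
    ∀ x : ℝ,
      a3 * (a2 * (a1 * x + b1) + b2) + b3 ≤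
        max (a2 * (a1 * (a3 * x + b3) + b1) + b2)
          (a1 * (a3 * (a2 * x + b2) + b3) + b1) :=
  stmt15_general a1 b1 a2 b2 a3 b3 ha1' ha3 ha3' hprod.le (h32.trans h21)
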